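/- The spectrum of the free discrete Dirac operator D with mass m ≥ 0 is exactly the set [−√(m²+4), −m] ∪ [m, √(m²+4)]. -/

import Mathlib

noncomputable section

/-- The Hilbert space `ℓ²(ℕ⁺, ℂ²)`. -/
abbrev DiracSpace : Type := lp (fun _ : ℕ+ => EuclideanSpace ℂ (Fin 2)) 2

/-- The component `φ^σₙ` of an element `Φ ∈ ℓ²(ℕ⁺, ℂ²)` (σ = 0 is `+`, σ = 1 is `−`). -/
def comp2 (Φ : DiracSpace) (n : ℕ+) (i : Fin 2) : ℂ :=
  (Φ : ∀ _ : ℕ+, EuclideanSpace ℂ (Fin 2)) n i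

/-- `D` acts as the free discrete Dirac operator with mass `m`. -/
def IsDiracOp (m : ℝ) (D : DiracSpace →L[ℂ] DiracSpace) : Prop :=
  ∀ Φ : DiracSpace,
    (∀ n : ℕ+, comp2 (D Φ) n 0 =
        (m : ℂ) * comp2 Φ n 0 + comp2 Φ n 1 - comp2 Φ (n + 1) 1) ∧
    (comp2 (D Φ) 1 1 = comp2 Φ 1 0 - (m : ℂ) * comp2 Φ 1 1) ∧
    (∀ n : ℕ+, comp2 (D Φ) (n + 1) 1 =
        comp2 Φ (n + 1) 0 - comp2 Φ n 0 - (m : ℂ) * comp2 Φ (n + 1) 1)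

/-!
The mass term anticommutes with the difference part of `D`, so `‖D Φ‖² - m² ‖Φ‖²` is the sum of
`|φ⁻ₙ - φ⁻ₙ₊₁|² + |φ⁺ₙ - φ⁺ₙ₋₁|²` up to a telescoping cross term that vanishes at both ends. By the
parallelogram law this sum lies between `0` and `4 ‖Φ‖²`, so that `x² ∈ [m², m² + 4]` for every
spectral value `x` of the self-adjoint operator `D`.

Conversely, such an `x` satisfies the dispersion relation `x² = m² - (w - 1)² / w` for some
`|w| = 1`, and the plane wave `((x + m) wⁿ, (w - 1) wⁿ⁻¹)` solves the eigenvalue equation away from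
the boundary; for `x = -m`, where it vanishes, the constant wave `(0, 1)` does. The truncations
of these waves to the first `N` sites have norms tending to infinity, while applying `D - x` leaves
only boundary terms of bounded size.
-/

open Filter Topology

theorem setOf_sq_mem_Icc (a : ℝ) {b : ℝ} (hb : 0 ≤ b) :
    {x : ℝ | x ^ 2 ∈ Set.Icc (a ^ 2) b} = Set.Icc (-√b) (-|a|) ∪ Set.Icc |a| √b := by
  ext x
  have hlower : a ^ 2 ≤ x ^ 2 ↔ x ≤ -|a| ∨ |a| ≤ x := sq_le_sq.trans le_abs'
  have hupper : x ^ 2 ≤ b ↔ -√b ≤ x ∧ x ≤ √b := by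
    rw [← abs_le, Real.le_sqrt (abs_nonneg x) hb, sq_abs]
  have ha : 0 ≤ |a| := abs_nonneg a
  simp only [Set.mem_ofPred_eq, Set.mem_Icc, Set.mem_union, hlower, hupper]
  constructor
  · rintro ⟨h | h, hl, hr⟩
    exacts [.inl ⟨hl, h⟩, .inr ⟨h, hr⟩]
  · rintro (⟨h, h'⟩ | ⟨h, h'⟩)
    · exact ⟨.inl h', h, by linarith⟩
    · exact ⟨.inr h, by linarith, h'⟩

theorem exists_norm_eq_one_sub_one_sq {s : ℝ} (hs : s ∈ Set.Icc 0 4) :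
    ∃ w : ℂ, ‖w‖ = 1 ∧ (w - 1) ^ 2 = -s * w := by
  set θ := Real.arccos (1 - s / 2)
  have hcos : 2 * Complex.cos θ = 2 - s := by
    rw [← Complex.ofReal_cos, Real.cos_arccos (by linarith [hs.2]) (by linarith [hs.1])]
    push_cast
    ring
  rw [Complex.two_cos] at hcos
  refine ⟨Complex.exp (θ * Complex.I), Complex.norm_exp_ofReal_mul_I θ, ?_⟩
  have hinv : Complex.exp (θ * Complex.I) * Complex.exp (-θ * Complex.I) = 1 := by
    rw [← Complex.exp_add]
    simp
  linear_combination Complex.exp (θ * Complex.I) * hcos - hinv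

section Operators

theorem tendsto_sum_add_telescope {M : Type*} [AddCommGroup M] [TopologicalSpace M]
    [IsTopologicalAddGroup M] {f F : ℕ → M} {s L : M} (hf : HasSum f s)
    (hF : Tendsto F atTop (𝓝 L)) :
    Tendsto (fun n => ∑ k ∈ Finset.range n, (f k + (F (k + 1) - F k))) atTop
      (𝓝 (s + (L - F 0))) := by
  simp only [Finset.sum_add_distrib, Finset.sum_range_sub]
  exact hf.tendsto_sum_nat.add (hF.sub_const _)

theorem mem_spectrum_of_tendsto_norm_atTop {𝕜 E ι : Type*} [NontriviallyNormedField 𝕜]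
    [NormedAddCommGroup E] [NormedSpace 𝕜 E] {T : E →L[𝕜] E} {z : 𝕜} {l : Filter ι} [l.NeBot]
    {x : ι → E} {C : ℝ} (hx : Tendsto (fun i => ‖x i‖) l atTop)
    (hC : ∀ i, ‖T (x i) - z • x i‖ ≤ C) : z ∈ spectrum 𝕜 T := by
  intro hz
  obtain ⟨c, hc, hbelow⟩ := antilipschitzWith_iff_exists_mul_le_norm.mp
    (ContinuousLinearMap.antilipschitz_of_isEmbedding _
      (ContinuousLinearMap.isHomeomorph_of_isUnit hz).isEmbedding)
  obtain ⟨i, hi⟩ := (hx.eventually_gt_atTop (C / c)).exists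
  have hres : c * ‖x i‖ ≤ C := calc
    c * ‖x i‖ ≤ ‖z • x i - T (x i)‖ := by
      simpa [Algebra.algebraMap_eq_smul_one] using hbelow (x i)
    _ ≤ C := norm_sub_rev (z • x i) _ ▸ hC i
  exact (le_div_iff₀' hc).mpr hres |>.not_gt hi

section InnerProductSpace

variable {𝕜 E : Type*} [RCLike 𝕜] [NormedAddCommGroup E] [InnerProductSpace 𝕜 E] [CompleteSpace E]
  {T : E →L[𝕜] E} {r : ℝ}

theorem notMem_spectrum_of_le_abs_norm_sq_sub (hT : IsSelfAdjoint T) {c : ℝ} (hc : 0 < c)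
    (h : ∀ x, c * ‖x‖ ^ 2 ≤ |‖T x‖ ^ 2 - r ^ 2 * ‖x‖ ^ 2|) : (r : 𝕜) ∉ spectrum 𝕜 T := by
  intro hr
  have hsq : (r : 𝕜) ^ 2 ∈ spectrum 𝕜 (T ^ 2) := spectrum.pow_mem_pow T 2 hr
  refine hsq ((IsUnit.sub_iff).mp ?_)
  refine ContinuousLinearMap.isUnit_of_forall_le_norm_inner_map _ (c := ⟨c, hc.le⟩) hc fun x => ?_
  have hinner : inner 𝕜 ((T ^ 2 - algebraMap 𝕜 (E →L[𝕜] E) ((r : 𝕜) ^ 2)) x) x =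
      ((‖T x‖ ^ 2 - r ^ 2 * ‖x‖ ^ 2 : ℝ) : 𝕜) := by
    have hTT : inner 𝕜 (T (T x)) x = inner 𝕜 (T x) (T x) := hT.isSymmetric (T x) x
    have hscalar : inner 𝕜 (algebraMap 𝕜 (E →L[𝕜] E) ((r : 𝕜) ^ 2) x) x =
        (r : 𝕜) ^ 2 * (‖x‖ : 𝕜) ^ 2 := by
      rw [Algebra.algebraMap_eq_smul_one, smul_apply, one_apply_eq_self, inner_smul_left,
        map_pow, RCLike.conj_ofReal, inner_self_eq_norm_sq_to_K]
    rw [pow_two T, sub_apply, mul_apply_eq_comp, inner_sub_left, hTT, hscalar,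
      inner_self_eq_norm_sq_to_K]
    push_cast
    rfl
  rw [hinner, RCLike.norm_ofReal, mul_comm]
  exact h x

theorem sq_mem_Icc_of_mem_spectrum (hT : IsSelfAdjoint T) {a b : ℝ}
    (ha : ∀ x, a * ‖x‖ ^ 2 ≤ ‖T x‖ ^ 2) (hb : ∀ x, ‖T x‖ ^ 2 ≤ b * ‖x‖ ^ 2)
    (hr : (r : 𝕜) ∈ spectrum 𝕜 T) : r ^ 2 ∈ Set.Icc a b := by
  constructor
  · by_contra! hlt
    refine notMem_spectrum_of_le_abs_norm_sq_sub hT (sub_pos.mpr hlt) (fun x => ?_) hr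
    exact le_abs.mpr <| .inl <| by linarith [ha x]
  · by_contra! hlt
    refine notMem_spectrum_of_le_abs_norm_sq_sub hT (sub_pos.mpr hlt) (fun x => ?_) hr
    exact le_abs.mpr <| .inr <| by linarith [hb x]

end InnerProductSpace

end Operators

namespace DiracSpace

variable (Φ Ψ : DiracSpace)

/-- The upper components `φ⁺ₖ` of `Φ`, extended by the boundary value `φ⁺₀ = 0`. -/
def plus : ℕ → ℂ
  | 0 => 0
  | k + 1 => comp2 Φ k.succPNat 0

/-- The lower components of `Φ`, indexed from `0`: `minus Φ k` is `φ⁻ₖ₊₁`. -/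
def minus (k : ℕ) : ℂ :=
  comp2 Φ k.succPNat 1

@[simp]
theorem plus_zero : plus Φ 0 = 0 := rfl

theorem plus_sub_smul (z : ℂ) : ∀ k, plus (Φ - z • Ψ) k = plus Φ k - z * plus Ψ k
  | 0 => by simp
  | _ + 1 => rfl

theorem minus_sub_smul (z : ℂ) (k : ℕ) : minus (Φ - z • Ψ) k = minus Φ k - z * minus Ψ k :=
  rfl

theorem hasSum_inner : HasSum
    (fun k => star (plus Φ (k + 1)) * plus Ψ (k + 1) + star (minus Φ k) * minus Ψ k)
    (inner ℂ Φ Ψ) := by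
  convert! Equiv.pnatEquivNat.symm.hasSum_iff.mpr (lp.hasSum_inner (𝕜 := ℂ) Φ Ψ) using 2 with k
  simp [plus, minus, comp2, PiLp.inner_apply, mul_comm]

theorem hasSum_norm_sq :
    HasSum (fun k => ‖plus Φ (k + 1)‖ ^ 2 + ‖minus Φ k‖ ^ 2) (‖Φ‖ ^ 2) := by
  convert! Complex.hasSum_re (hasSum_inner Φ Φ) using 1
  · ext k
    simp [Complex.sq_norm, Complex.normSq_apply]
  · exact norm_sq_eq_re_inner (𝕜 := ℂ) Φ

theorem tendsto_plus : Tendsto (plus Φ) atTop (𝓝 0) := by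
  have hsum := (hasSum_norm_sq Φ).summable.of_nonneg_of_le (fun k => sq_nonneg ‖plus Φ (k + 1)‖)
    fun k => le_add_of_nonneg_right (sq_nonneg _)
  rw [← tendsto_add_atTop_iff_nat 1, tendsto_zero_iff_norm_tendsto_zero]
  simpa using hsum.tendsto_atTop_zero.sqrt

theorem tendsto_minus : Tendsto (minus Φ) atTop (𝓝 0) := by
  have hsum := (hasSum_norm_sq Φ).summable.of_nonneg_of_le (fun k => sq_nonneg ‖minus Φ k‖)
    fun k => le_add_of_nonneg_left (sq_nonneg _)
  rw [tendsto_zero_iff_norm_tendsto_zero]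
  simpa using hsum.tendsto_atTop_zero.sqrt

theorem tendsto_star_plus_mul_minus :
    Tendsto (fun k => star (plus Φ k) * minus Ψ k) atTop (𝓝 0) := by
  simpa only [star_zero, zero_mul] using (tendsto_plus Φ).star.mul (tendsto_minus Ψ)

theorem tendsto_re_star_plus_mul_minus :
    Tendsto (fun k => (star (plus Φ k) * minus Φ k).re) atTop (𝓝 0) :=
  (Complex.continuous_re.tendsto 0).comp (tendsto_star_plus_mul_minus Φ Φ)

section Truncate

variable (u v : ℕ → ℂ) (N : ℕ)

/-- The finitely supported spinor that agrees with `(u (k + 1), v k)`, in the indexing of `plus`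
and `minus`, at the first `N` sites. -/
def truncate : DiracSpace :=
  ∑ k ∈ Finset.range N, lp.single 2 k.succPNat !₂[u (k + 1), v k]

theorem truncate_apply (k : ℕ) :
    truncate u v N k.succPNat = if k < N then !₂[u (k + 1), v k] else 0 := by
  rw [truncate, lp.coeFn_sum, Finset.sum_apply]
  simp [Pi.single_apply]

theorem plus_truncate (k : ℕ) :
    plus (truncate u v N) (k + 1) = if k < N then u (k + 1) else 0 := by
  rw [plus, comp2, truncate_apply]
  split_ifs <;> simp

theorem minus_truncate (k : ℕ) : minus (truncate u v N) k = if k < N then v k else 0 := by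
  rw [minus, comp2, truncate_apply]
  split_ifs <;> simp

theorem norm_truncate_sq :
    ‖truncate u v N‖ ^ 2 = ∑ k ∈ Finset.range N, (‖u (k + 1)‖ ^ 2 + ‖v k‖ ^ 2) := by
  rw [← (hasSum_norm_sq _).tsum_eq, tsum_eq_sum (s := Finset.range N) fun k hk => ?_]
  · refine Finset.sum_congr rfl fun k hk => ?_
    rw [plus_truncate, minus_truncate, if_pos (Finset.mem_range.mp hk),
      if_pos (Finset.mem_range.mp hk)]
  · rw [Finset.mem_range] at hk
    simp [plus_truncate, minus_truncate, hk]

end Truncate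

end DiracSpace

/-- The sequences `u`, `v`, indexed as `DiracSpace.plus` and `DiracSpace.minus`, solve the
eigenvalue equation of the Dirac operator with mass `m` at energy `z`. Neither
square-summability nor the boundary condition `u 0 = 0` is imposed. -/
structure IsFormalEigenvector (m : ℝ) (z : ℂ) (u v : ℕ → ℂ) : Prop where
  plus_eq : ∀ k, m * u (k + 1) + v k - v (k + 1) = z * u (k + 1)
  minus_eq : ∀ k, u (k + 1) - u k - m * v k = z * v k

namespace IsDiracOp

open DiracSpace

variable {m : ℝ} {D : DiracSpace →L[ℂ] DiracSpace} (hD : IsDiracOp m D)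

include hD

theorem plus_apply (Φ : DiracSpace) (k : ℕ) :
    plus (D Φ) (k + 1) = m * plus Φ (k + 1) + minus Φ k - minus Φ (k + 1) :=
  (hD Φ).1 k.succPNat

theorem minus_apply (Φ : DiracSpace) :
    ∀ k, minus (D Φ) k = plus Φ (k + 1) - plus Φ k - m * minus Φ k
  | 0 => by rw [plus_zero, sub_zero]; exact (hD Φ).2.1
  | k + 1 => (hD Φ).2.2 k.succPNat

theorem isSelfAdjoint : IsSelfAdjoint D := by
  refine ContinuousLinearMap.isSelfAdjoint_iff_isSymmetric.mpr fun Φ Ψ => ?_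
  set wronskian : ℕ → ℂ := fun k => star (minus Φ k) * plus Ψ k - star (plus Φ k) * minus Ψ k
  have hwronskian : Tendsto wronskian atTop (𝓝 0) := by
    simpa only [star_mul, star_star, star_zero, sub_zero] using
      (tendsto_star_plus_mul_minus Ψ Φ).star.sub (tendsto_star_plus_mul_minus Φ Ψ)
  have hlim := tendsto_sum_add_telescope
    ((hasSum_inner (D Φ) Ψ).sub (hasSum_inner Φ (D Ψ))) hwronskian
  have hgreen (k : ℕ) : star (plus (D Φ) (k + 1)) * plus Ψ (k + 1) +
      star (minus (D Φ) k) * minus Ψ k - (star (plus Φ (k + 1)) * plus (D Ψ) (k + 1) +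
      star (minus Φ k) * minus (D Ψ) k) + (wronskian (k + 1) - wronskian k) = 0 := by
    simp only [wronskian, hD.plus_apply, hD.minus_apply, star_add, star_sub, star_mul',
      Complex.star_def, Complex.conj_ofReal]
    ring
  simp only [hgreen, Finset.sum_const_zero] at hlim
  simpa [wronskian, sub_eq_zero] using tendsto_nhds_unique hlim tendsto_const_nhds

theorem norm_sq_apply_site (Φ : DiracSpace) (k : ℕ) :
    ‖plus (D Φ) (k + 1)‖ ^ 2 + ‖minus (D Φ) k‖ ^ 2 =
      m ^ 2 * (‖plus Φ (k + 1)‖ ^ 2 + ‖minus Φ k‖ ^ 2) +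
        (‖minus Φ k - minus Φ (k + 1)‖ ^ 2 + ‖plus Φ (k + 1) - plus Φ k‖ ^ 2) -
        2 * m * ((star (plus Φ (k + 1)) * minus Φ (k + 1)).re -
          (star (plus Φ k) * minus Φ k).re) := by
  simp only [hD.plus_apply, hD.minus_apply, Complex.sq_norm, Complex.normSq_apply,
    Complex.add_re, Complex.add_im, Complex.sub_re, Complex.sub_im, Complex.mul_re,
    Complex.mul_im, Complex.ofReal_re, Complex.ofReal_im, Complex.star_def, Complex.conj_re,
    Complex.conj_im]
  ring

theorem sq_mul_norm_sq_le (Φ : DiracSpace) : m ^ 2 * ‖Φ‖ ^ 2 ≤ ‖D Φ‖ ^ 2 := by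
  set flux : ℕ → ℝ := fun k => 2 * m * (star (plus Φ k) * minus Φ k).re with flux_def
  have hflux : Tendsto flux atTop (𝓝 0) := by
    simpa only [mul_zero] using (tendsto_re_star_plus_mul_minus Φ).const_mul (2 * m)
  have hlim := tendsto_sum_add_telescope
    ((hasSum_norm_sq (D Φ)).sub ((hasSum_norm_sq Φ).mul_left (m ^ 2))) hflux
  have hsquares (k : ℕ) : ‖plus (D Φ) (k + 1)‖ ^ 2 + ‖minus (D Φ) k‖ ^ 2 -
      m ^ 2 * (‖plus Φ (k + 1)‖ ^ 2 + ‖minus Φ k‖ ^ 2) + (flux (k + 1) - flux k) =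
      ‖minus Φ k - minus Φ (k + 1)‖ ^ 2 + ‖plus Φ (k + 1) - plus Φ k‖ ^ 2 := by
    linear_combination hD.norm_sq_apply_site Φ k
  have hnonneg := ge_of_tendsto' hlim fun n => Finset.sum_nonneg fun k _ =>
    (hsquares k).symm ▸ by positivity
  have hflux_zero : flux 0 = 0 := by simp [flux_def]
  linarith

theorem norm_sq_le (Φ : DiracSpace) : ‖D Φ‖ ^ 2 ≤ (m ^ 2 + 4) * ‖Φ‖ ^ 2 := by
  set flux : ℕ → ℝ := fun k => 2 * (‖minus Φ k‖ ^ 2 - ‖plus Φ k‖ ^ 2) -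
    2 * m * (star (plus Φ k) * minus Φ k).re with flux_def
  have hflux : Tendsto flux atTop (𝓝 0) := by
    simpa only [norm_zero, ne_eq, OfNat.ofNat_ne_zero, not_false_eq_true, zero_pow, sub_zero,
      mul_zero] using
      ((((tendsto_minus Φ).norm.pow 2).sub ((tendsto_plus Φ).norm.pow 2)).const_mul 2).sub
        ((tendsto_re_star_plus_mul_minus Φ).const_mul (2 * m))
  have hlim := tendsto_sum_add_telescope
    (((hasSum_norm_sq Φ).mul_left (m ^ 2 + 4)).sub (hasSum_norm_sq (D Φ))) hflux
  have hsquares (k : ℕ) : (m ^ 2 + 4) * (‖plus Φ (k + 1)‖ ^ 2 + ‖minus Φ k‖ ^ 2) -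
      (‖plus (D Φ) (k + 1)‖ ^ 2 + ‖minus (D Φ) k‖ ^ 2) + (flux (k + 1) - flux k) =
      ‖minus Φ k + minus Φ (k + 1)‖ ^ 2 + ‖plus Φ (k + 1) + plus Φ k‖ ^ 2 := by
    linear_combination -hD.norm_sq_apply_site Φ k -
      parallelogram_law_with_norm ℂ (minus Φ k) (minus Φ (k + 1)) -
      parallelogram_law_with_norm ℂ (plus Φ (k + 1)) (plus Φ k)
  have hnonneg := ge_of_tendsto' hlim fun n => Finset.sum_nonneg fun k _ =>
    (hsquares k).symm ▸ by positivity
  have hflux_zero : flux 0 = 2 * ‖minus Φ 0‖ ^ 2 := by simp [flux_def]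
  linarith [sq_nonneg ‖minus Φ 0‖]

section FormalEigenvector

variable {z : ℂ} {u v : ℕ → ℂ} (h : IsFormalEigenvector m z u v)

include h

theorem plus_residual_truncate (N k : ℕ) :
    plus (D (truncate u v (N + 1)) - z • truncate u v (N + 1)) (k + 1) =
      if k = N then v (N + 1) else 0 := by
  rw [plus_sub_smul, hD.plus_apply, plus_truncate, minus_truncate, minus_truncate]
  rcases lt_trichotomy k N with hk | rfl | hk
  · rw [if_pos (by lia : k < N + 1), if_pos (by lia : k < N + 1),
      if_pos (by lia : k + 1 < N + 1), if_neg hk.ne]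
    linear_combination h.plus_eq k
  · rw [if_pos k.lt_add_one, if_pos k.lt_add_one, if_neg (lt_irrefl _), if_pos rfl]
    linear_combination h.plus_eq k
  · rw [if_neg (by lia : ¬k < N + 1), if_neg (by lia : ¬k < N + 1),
      if_neg (by lia : ¬k + 1 < N + 1), if_neg hk.ne']
    ring

theorem minus_residual_truncate (N : ℕ) : ∀ k,
    minus (D (truncate u v (N + 1)) - z • truncate u v (N + 1)) k =
      if k = 0 then u 0 else if k = N + 1 then -u (N + 1) else 0
  | 0 => by
    rw [minus_sub_smul, hD.minus_apply, plus_truncate, minus_truncate, plus_zero,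
      if_pos N.succ_pos, if_pos N.succ_pos, if_pos rfl]
    linear_combination h.minus_eq 0
  | k + 1 => by
    rw [minus_sub_smul, hD.minus_apply, plus_truncate, plus_truncate, minus_truncate,
      if_neg k.succ_ne_zero]
    rcases lt_trichotomy k N with hk | rfl | hk
    · rw [if_pos (by lia : k + 1 < N + 1), if_pos (by lia : k + 1 < N + 1),
        if_pos (by lia : k < N + 1), if_neg (by lia)]
      linear_combination h.minus_eq (k + 1)
    · rw [if_neg (lt_irrefl _), if_neg (lt_irrefl _), if_pos k.lt_add_one, if_pos rfl]
      ring
    · rw [if_neg (by lia : ¬k + 1 < N + 1), if_neg (by lia : ¬k + 1 < N + 1),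
        if_neg (by lia : ¬k < N + 1), if_neg (by lia)]
      ring

variable {C : ℝ} (hu : ∀ k, ‖u k‖ ≤ C) (hv : ∀ k, ‖v k‖ ≤ C)

include hu hv

theorem norm_residual_truncate_sq_le (N : ℕ) :
    ‖D (truncate u v (N + 1)) - z • truncate u v (N + 1)‖ ^ 2 ≤ 3 * C ^ 2 := by
  have hu_sq (k : ℕ) : ‖u k‖ ^ 2 ≤ C ^ 2 := pow_le_pow_left₀ (norm_nonneg _) (hu k) 2
  have hv_sq (k : ℕ) : ‖v k‖ ^ 2 ≤ C ^ 2 := pow_le_pow_left₀ (norm_nonneg _) (hv k) 2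
  have hbound (k : ℕ) :
      ‖plus (D (truncate u v (N + 1)) - z • truncate u v (N + 1)) (k + 1)‖ ^ 2 +
        ‖minus (D (truncate u v (N + 1)) - z • truncate u v (N + 1)) k‖ ^ 2 ≤
      (if k = N then C ^ 2 else 0) +
        ((if k = 0 then C ^ 2 else 0) + if k = N + 1 then C ^ 2 else 0) := by
    rw [hD.plus_residual_truncate h, hD.minus_residual_truncate h]
    gcongr
    · split_ifs <;> simp [hv_sq]
    · split_ifs <;> simp_all
  calc ‖D (truncate u v (N + 1)) - z • truncate u v (N + 1)‖ ^ 2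
    _ ≤ C ^ 2 + (C ^ 2 + C ^ 2) := hasSum_le hbound (hasSum_norm_sq _)
        ((hasSum_ite_eq N _).add ((hasSum_ite_eq 0 _).add (hasSum_ite_eq (N + 1) _)))
    _ = 3 * C ^ 2 := by ring

theorem mem_spectrum_of_isFormalEigenvector
    (hdiv : Tendsto (fun N => ∑ k ∈ Finset.range N, (‖u (k + 1)‖ ^ 2 + ‖v k‖ ^ 2)) atTop atTop) :
    z ∈ spectrum ℂ D := by
  refine mem_spectrum_of_tendsto_norm_atTop (x := fun N => truncate u v (N + 1)) (l := atTop) ?_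
    fun N => Real.le_sqrt_of_sq_le (hD.norm_residual_truncate_sq_le h hu hv N)
  simpa [Function.comp_def, ← norm_truncate_sq] using
    Real.tendsto_sqrt_atTop.comp (hdiv.comp (tendsto_add_atTop_nat 1))

end FormalEigenvector

theorem mem_spectrum_of_planeWave {z α β w : ℂ} (hw : ‖w‖ = 1) (hαβ : α ≠ 0 ∨ β ≠ 0)
    (hplus : m * (α * w) + β - β * w = z * (α * w)) (hminus : α * w - α - m * β = z * β) :
    z ∈ spectrum ℂ D := by
  have hnorm (γ : ℂ) (k : ℕ) : ‖γ * w ^ k‖ = ‖γ‖ := by simp [hw]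
  have hwave : IsFormalEigenvector m z (fun k => α * w ^ k) (fun k => β * w ^ k) :=
    ⟨fun k => by linear_combination w ^ k * hplus, fun k => by linear_combination w ^ k * hminus⟩
  have hpos : 0 < ‖α‖ ^ 2 + ‖β‖ ^ 2 := by
    rcases hαβ with hα | hβ <;> positivity
  refine hD.mem_spectrum_of_isFormalEigenvector hwave (C := max ‖α‖ ‖β‖)
    (fun k => (hnorm α k).trans_le (le_max_left _ _))
    (fun k => (hnorm β k).trans_le (le_max_right _ _)) ?_
  simpa only [hnorm, Finset.sum_const, Finset.card_range, nsmul_eq_mul] using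
    tendsto_natCast_atTop_atTop.atTop_mul_const hpos

theorem ofReal_mem_spectrum {x : ℝ} (hx : x ^ 2 ∈ Set.Icc (m ^ 2) (m ^ 2 + 4)) :
    (x : ℂ) ∈ spectrum ℂ D := by
  obtain ⟨w, hw, hdisp⟩ := exists_norm_eq_one_sub_one_sq (s := x ^ 2 - m ^ 2)
    ⟨by linarith [hx.1], by linarith [hx.2]⟩
  push_cast at hdisp
  by_cases hxm : (x : ℂ) + m = 0
  · exact hD.mem_spectrum_of_planeWave (α := 0) (β := 1) (w := 1) norm_one (.inr one_ne_zero)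
      (by ring) (by linear_combination -hxm)
  · exact hD.mem_spectrum_of_planeWave (α := x + m) (β := w - 1) hw (.inl hxm)
      (by linear_combination -hdisp) (by ring)

theorem spectrum_eq : spectrum ℂ D = (↑) '' {x : ℝ | x ^ 2 ∈ Set.Icc (m ^ 2) (m ^ 2 + 4)} := by
  refine Set.Subset.antisymm (fun z hz => ?_) ?_
  · have hre : z = z.re := hD.isSelfAdjoint.mem_spectrum_eq_re hz
    exact ⟨z.re, sq_mem_Icc_of_mem_spectrum hD.isSelfAdjoint hD.sq_mul_norm_sq_le hD.norm_sq_le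
      (hre ▸ hz), hre.symm⟩
  · rintro _ ⟨x, hx, rfl⟩
    exact hD.ofReal_mem_spectrum hx

end IsDiracOp

theorem free_dirac_spectrum_general (m : ℝ) (D : DiracSpace →L[ℂ] DiracSpace)
    (hD : IsDiracOp m D) :
    spectrum ℂ D = (fun x : ℝ => (x : ℂ)) ''
      (Set.Icc (-Real.sqrt (m ^ 2 + 4)) (-|m|) ∪ Set.Icc |m| (Real.sqrt (m ^ 2 + 4))) := by
  rw [hD.spectrum_eq, setOf_sq_mem_Icc m (by positivity)]

/-- the spectrum of the free discrete Dirac operator with mass `m ≥ 0` is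
exactly `[−√(m²+4), −m] ∪ [m, √(m²+4)]`. -/
theorem free_dirac_spectrum (m : ℝ) (hm : 0 ≤ m)
    (D : DiracSpace →L[ℂ] DiracSpace) (hD : IsDiracOp m D) :
    spectrum ℂ D = (fun x : ℝ => (x : ℂ)) ''
      (Set.Icc (-Real.sqrt (m ^ 2 + 4)) (-m) ∪ Set.Icc m (Real.sqrt (m ^ 2 + 4))) := by
  simpa only [abs_of_nonneg hm] using free_dirac_spectrum_general m D hD
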